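/- Let a, b, z be complex numbers such that b is not a pole of the relevant Pochhammer denominators, i.e., 2b, b, and b+2n (for all n ≥ 0) avoid nonpositive integers so that all terms are defined. Then the summation formula M(2a; 2b; z) = Σ_{n=0}^∞ ((a)_n (b)_n (b−a)_n / ((b)_{2n} (2b)_{2n} · n!)) · (−z²)^n · M(a+n; b+2n; z) holds for all such a, b and all z ∈ ℂ (without any positivity assumptions on real parts). -/

import Mathlib

/-- Pochhammer symbol `(x)_n = x (x+1) ⋯ (x+n-1)`. -/
noncomputable def poch (x : ℂ) (n : ℕ) : ℂ := ∏ k ∈ Finset.range n, (x + k)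

/-- Kummer's confluent hypergeometric function `M(a; b; z)`. -/
noncomputable def kummerM (a b z : ℂ) : ℂ :=
  ∑' n : ℕ, poch a n / (poch b n * n.factorial) * z ^ n

/-!
Expanding `M(a + n; b + 2n; z)` on the right-hand side gives an absolutely convergent double
series. Collecting the powers of `z` reduces the formula to a terminating hypergeometric sum,
the balanced `₃F₂(-N/2, (1-N)/2, b-a; b+1/2, 1-a-N; 1)` of Pfaff and Saalschütz, whose value
follows from a first-order recurrence in `N` proved by creative telescoping. The duplication
formula `(2b)_{2n} = 4^n (b)_n (b+1/2)_n` cancels the factor `(b)_n` throughout.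
-/

open Finset Filter Function Topology
open scoped Nat

theorem poch_zero (x : ℂ) : poch x 0 = 1 := prod_range_zero _

theorem poch_succ (x : ℂ) (n : ℕ) : poch x (n + 1) = poch x n * (x + n) := prod_range_succ _ n

theorem poch_add (x : ℂ) (m n : ℕ) : poch x (m + n) = poch x m * poch (x + m) n := by
  simp only [poch, prod_range_add, Nat.cast_add, add_assoc]

theorem poch_one_left (n : ℕ) : poch 1 n = n ! := by
  rw [poch, ← prod_range_add_one_eq_factorial]
  push_cast
  simp only [add_comm]

theorem poch_two_mul (x : ℂ) (n : ℕ) :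
    poch (2 * x) (2 * n) = 4 ^ n * poch x n * poch (x + 1 / 2) n := by
  induction n with
  | zero => simp only [mul_zero, poch_zero, pow_zero, mul_one]
  | succ n ih =>
    rw [show 2 * (n + 1) = 2 * n + 1 + 1 by ring]
    simp only [poch_succ, ih]
    push_cast
    ring

theorem add_natCast_ne_zero {x : ℂ} (hx : ∀ m : ℕ, x ≠ -(m : ℂ)) (n : ℕ) : x + n ≠ 0 :=
  fun h ↦ hx n (eq_neg_of_add_eq_zero_left h)

theorem add_half_ne_neg_natCast {x : ℂ} (hx : ∀ m : ℕ, 2 * x ≠ -(m : ℂ)) (m : ℕ) :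
    x + 1 / 2 ≠ -(m : ℂ) :=
  fun h ↦ hx (2 * m + 1) (by push_cast; linear_combination 2 * h)

theorem poch_ne_zero {x : ℂ} (hx : ∀ m : ℕ, x ≠ -(m : ℂ)) (n : ℕ) : poch x n ≠ 0 :=
  prod_ne_zero_iff.mpr fun k _ ↦ add_natCast_ne_zero hx k

theorem exists_norm_poch_le_pow_mul_norm_poch (x : ℂ) {y : ℂ} (hy : ∀ m : ℕ, y ≠ -(m : ℂ)) :
    ∃ C : ℝ, 0 ≤ C ∧ ∀ n, ‖poch x n‖ ≤ C ^ n * ‖poch y n‖ := by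
  have tendsto_ratio : Tendsto (fun n : ℕ ↦ (x + n) / (y + n)) atTop (𝓝 1) := by
    simpa using tendsto_add_mul_div_add_mul_atTop_nhds x y 1 (one_ne_zero' ℂ)
  obtain ⟨C, hC⟩ := tendsto_ratio.norm.bddAbove_range
  have ratio_le (k : ℕ) : ‖(x + k) / (y + k)‖ ≤ C := hC (Set.mem_range_self k)
  refine ⟨C, (norm_nonneg _).trans (ratio_le 0), fun n ↦ ?_⟩
  rw [← div_le_iff₀ (norm_pos_iff.mpr (poch_ne_zero hy n)), ← norm_div, poch, poch,
    ← prod_div_distrib, norm_prod]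
  calc ∏ k ∈ range n, ‖(x + k) / (y + k)‖ ≤ ∏ _k ∈ range n, C :=
        prod_le_prod (fun _ _ ↦ norm_nonneg _) fun k _ ↦ ratio_le k
    _ = C ^ n := by rw [prod_const, card_range]

theorem natCast_descFactorial_succ {R : Type*} [Ring R] (n k : ℕ) :
    (n.descFactorial (k + 1) : R) = n.descFactorial k * (n - k) := by
  simp only [← descPochhammer_eval_eq_descFactorial, descPochhammer_succ_eval]

/-- The summand of the terminating Saalschützian sum: the coefficient of `z ^ N` in the `n`-th term
of the summation formula, multiplied by `(b)_N N!`. The descending factorial `N (N-1) ⋯ (N-2n+1)`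
vanishes for `N < 2n`, so the truncated subtraction `N - n` is harmless. -/
noncomputable def saalschutzTerm (a b : ℂ) (N n : ℕ) : ℂ :=
  (-1 / 4) ^ n * poch a (N - n) * poch (b - a) n * N.descFactorial (2 * n) /
    (poch (b + 1 / 2) n * n !)

theorem saalschutzTerm_of_lt (a b : ℂ) {N n : ℕ} (h : N < 2 * n) : saalschutzTerm a b N n = 0 := by
  simp [saalschutzTerm, Nat.descFactorial_of_lt h]

theorem saalschutzTerm_zero_right (a b : ℂ) (N : ℕ) : saalschutzTerm a b N 0 = poch a N := by
  simp [saalschutzTerm, poch_zero]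

theorem saalschutzTerm_succ_succ (a : ℂ) {b : ℂ} (hb : ∀ m : ℕ, b + 1 / 2 ≠ -(m : ℂ)) (N n : ℕ) :
    2 * (n + 1) * (2 * b + 2 * n + 1) * saalschutzTerm a b (N + 1) (n + 1) =
      -((N + 1) * (b - a + n) * (N - 2 * n) * saalschutzTerm a b N n) := by
  have descFactorial_eq : ((N + 1).descFactorial (2 * (n + 1)) : ℂ) =
      (N + 1) * (N.descFactorial (2 * n) * (N - 2 * n)) := by
    rw [show 2 * (n + 1) = 2 * n + 1 + 1 by ring, Nat.succ_descFactorial_succ, Nat.cast_mul,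
      natCast_descFactorial_succ]
    push_cast
    ring
  have shift_ne := add_natCast_ne_zero hb n
  have hn : (n : ℂ) + 1 ≠ 0 := n.cast_add_one_ne_zero
  have hfact : (n ! : ℂ) ≠ 0 := mod_cast n.factorial_ne_zero
  have linear_eq : 2 * b + 2 * n + 1 = 2 * (b + 1 / 2 + n) := by ring
  rw [saalschutzTerm, saalschutzTerm, descFactorial_eq, Nat.add_sub_add_right, poch_succ,
    poch_succ, pow_succ, Nat.factorial_succ, linear_eq]
  push_cast
  generalize b + 1 / 2 + (n : ℂ) = c at *
  field_simp
  ring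

theorem saalschutzTerm_succ_left (a b : ℂ) (N n : ℕ) :
    (N + 1 - 2 * n) * saalschutzTerm a b (N + 1) n =
      (N + 1) * (a + N - n) * saalschutzTerm a b N n := by
  rcases le_or_gt n N with hn | hn
  · have descFactorial_eq : ((N + 1).descFactorial (2 * n) : ℂ) * (N + 1 - 2 * n) =
        (N + 1) * N.descFactorial (2 * n) := by
      have h := natCast_descFactorial_succ (R := ℂ) (N + 1) (2 * n)
      rw [Nat.succ_descFactorial_succ] at h
      push_cast at h
      exact h.symm
    rw [saalschutzTerm, saalschutzTerm, Nat.succ_sub hn, poch_succ, Nat.cast_sub hn]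
    linear_combination (-1 / 4) ^ n * poch a (N - n) * (a + N - n) * poch (b - a) n /
      (poch (b + 1 / 2) n * n !) * descFactorial_eq
  · rw [saalschutzTerm_of_lt a b (by omega), saalschutzTerm_of_lt a b (by omega), mul_zero,
      mul_zero]

theorem saalschutzTerm_telescope (a : ℂ) {b : ℂ} (hb : ∀ m : ℕ, b + 1 / 2 ≠ -(m : ℂ)) (N n : ℕ) :
    (N + 1) * ((2 * b + N) * saalschutzTerm a b (N + 1) n
        - (2 * a + N) * (b + N) * saalschutzTerm a b N n) =
      2 * n * (2 * b + 2 * n - 1) * saalschutzTerm a b (N + 1) n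
        - 2 * (n + 1) * (2 * b + 2 * n + 1) * saalschutzTerm a b (N + 1) (n + 1) := by
  linear_combination (2 * b + N + 2 * n) * saalschutzTerm_succ_left a b N n
    + saalschutzTerm_succ_succ a hb N n

theorem sum_saalschutzTerm_succ (a : ℂ) {b : ℂ} (hb : ∀ m : ℕ, b + 1 / 2 ≠ -(m : ℂ)) {N M : ℕ}
    (h : N + 1 < 2 * M) :
    (2 * b + N) * ∑ n ∈ range M, saalschutzTerm a b (N + 1) n =
      (2 * a + N) * (b + N) * ∑ n ∈ range M, saalschutzTerm a b N n := by
  let G (n : ℕ) : ℂ := 2 * n * (2 * b + 2 * n - 1) * saalschutzTerm a b (N + 1) n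
  have telescope (n : ℕ) : (N + 1) * ((2 * b + N) * saalschutzTerm a b (N + 1) n
      - (2 * a + N) * (b + N) * saalschutzTerm a b N n) = G n - G (n + 1) := by
    rw [saalschutzTerm_telescope a hb]
    simp only [G]
    push_cast
    ring
  have G_zero : G 0 = 0 := by simp [G]
  have G_end : G M = 0 := by simp only [G, saalschutzTerm_of_lt a b h, mul_zero]
  refine sub_eq_zero.mp (mul_left_cancel₀ (N.cast_add_one_ne_zero (R := ℂ)) ?_)
  rw [mul_sum, mul_sum, ← sum_sub_distrib, mul_sum, sum_congr rfl fun n _ ↦ telescope n,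
    sum_range_sub', G_zero, G_end, sub_zero, mul_zero]

theorem poch_mul_sum_saalschutzTerm (a : ℂ) {b : ℂ} (hb : ∀ m : ℕ, b + 1 / 2 ≠ -(m : ℂ)) {N M : ℕ}
    (h : N < 2 * M) :
    poch (2 * b) N * ∑ n ∈ range M, saalschutzTerm a b N n = poch (2 * a) N * poch b N := by
  induction N with
  | zero =>
    have term_eq_zero : ∀ n ∈ range M, n ≠ 0 → saalschutzTerm a b 0 n = 0 :=
      fun n _ hn ↦ saalschutzTerm_of_lt a b (by omega)
    rw [sum_eq_single_of_mem 0 (mem_range.mpr (by omega)) term_eq_zero, saalschutzTerm_zero_right]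
    simp only [poch_zero, mul_one]
  | succ N ih =>
    simp only [poch_succ]
    linear_combination poch (2 * b) N * sum_saalschutzTerm_succ a hb h
      + (2 * a + N) * (b + N) * ih (by omega)

/-- The double series obtained by expanding the right-hand side of the summation formula: the entry
at `(N, n)` is the part of degree `N` in `z` of the `n`-th term, and is zero unless `2n ≤ N`. -/
noncomputable def kummerDoubleTerm (a b z : ℂ) (p : ℕ × ℕ) : ℂ :=
  saalschutzTerm a b p.1 p.2 / (poch b p.1 * p.1 !) * z ^ p.1

theorem kummerDoubleTerm_of_lt (a b z : ℂ) {N n : ℕ} (h : N < 2 * n) :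
    kummerDoubleTerm a b z (N, n) = 0 := by
  rw [kummerDoubleTerm, saalschutzTerm_of_lt a b h, zero_div, zero_mul]

theorem kummerDoubleTerm_two_mul_add (a b z : ℂ) (n k : ℕ) :
    kummerDoubleTerm a b z (2 * n + k, n) =
      (-1 / 4) ^ n * poch a (n + k) * poch (b - a) n /
        (poch (b + 1 / 2) n * poch b (2 * n + k) * n ! * k !) * z ^ (2 * n + k) := by
  have factorial_eq : ((2 * n + k) ! : ℂ) = k ! * (2 * n + k).descFactorial (2 * n) := by
    have h := Nat.factorial_mul_descFactorial (Nat.le_add_right (2 * n) k)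
    rw [Nat.add_sub_cancel_left] at h
    exact_mod_cast h.symm
  have descFactorial_ne : ((2 * n + k).descFactorial (2 * n) : ℂ) ≠ 0 :=
    Nat.cast_ne_zero.mpr fun h ↦ by rw [Nat.descFactorial_eq_zero_iff_lt] at h; omega
  rw [kummerDoubleTerm, saalschutzTerm, factorial_eq, show 2 * n + k - n = n + k by omega]
  field_simp

theorem exists_norm_kummerDoubleTerm_le (a z : ℂ) {b : ℂ} (hb : ∀ m : ℕ, b ≠ -(m : ℂ))
    (hb' : ∀ m : ℕ, b + 1 / 2 ≠ -(m : ℂ)) :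
    ∃ P Q : ℝ, ∀ n k : ℕ, ‖kummerDoubleTerm a b z (2 * n + k, n)‖ ≤
      P ^ n / n ! * (Q ^ k / k !) := by
  have one_ne (m : ℕ) : (1 : ℂ) ≠ -(m : ℂ) := fun h ↦
    m.cast_add_one_ne_zero (R := ℂ) (by linear_combination h)
  obtain ⟨A, hA, poch_a_le⟩ := exists_norm_poch_le_pow_mul_norm_poch a one_ne
  obtain ⟨B, hB, factorial_le⟩ := exists_norm_poch_le_pow_mul_norm_poch 1 hb
  obtain ⟨C, -, poch_sub_le⟩ := exists_norm_poch_le_pow_mul_norm_poch (b - a) hb'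
  simp only [poch_one_left, Complex.norm_natCast] at poch_a_le factorial_le
  refine ⟨A * B ^ 2 * C * ‖z‖ ^ 2 / 4, A * B * ‖z‖, fun n k ↦ ?_⟩
  have poch_a_le_poch_b :
      ‖poch a (n + k)‖ ≤ A ^ (n + k) * (B ^ (2 * n + k) * ‖poch b (2 * n + k)‖) :=
    calc ‖poch a (n + k)‖ ≤ A ^ (n + k) * (n + k) ! := poch_a_le _
      _ ≤ A ^ (n + k) * (2 * n + k) ! := by gcongr; omega
      _ ≤ _ := by gcongr; exact factorial_le _
  have hpoch : ‖poch b (2 * n + k)‖ ≠ 0 := norm_ne_zero_iff.mpr (poch_ne_zero hb _)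
  have hpoch' : ‖poch (b + 1 / 2) n‖ ≠ 0 := norm_ne_zero_iff.mpr (poch_ne_zero hb' _)
  calc ‖kummerDoubleTerm a b z (2 * n + k, n)‖
      = (1 / 4) ^ n * ‖poch a (n + k)‖ * ‖poch (b - a) n‖ /
          (‖poch (b + 1 / 2) n‖ * ‖poch b (2 * n + k)‖ * n ! * k !) * ‖z‖ ^ (2 * n + k) := by
        simp [kummerDoubleTerm_two_mul_add]
    _ ≤ (1 / 4) ^ n * (A ^ (n + k) * (B ^ (2 * n + k) * ‖poch b (2 * n + k)‖)) *
          (C ^ n * ‖poch (b + 1 / 2) n‖) /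
          (‖poch (b + 1 / 2) n‖ * ‖poch b (2 * n + k)‖ * n ! * k !) * ‖z‖ ^ (2 * n + k) := by
        gcongr
        exact poch_sub_le n
    _ = _ := by
        simp only [div_pow, mul_pow, pow_add, pow_mul, one_pow]
        generalize ‖poch (b + 1 / 2) n‖ = D at *
        field_simp

theorem summable_kummerDoubleTerm (a z : ℂ) {b : ℂ} (hb : ∀ m : ℕ, b ≠ -(m : ℂ))
    (hb' : ∀ m : ℕ, b + 1 / 2 ≠ -(m : ℂ)) : Summable (kummerDoubleTerm a b z) := by
  have injective_index : Injective fun p : ℕ × ℕ ↦ (2 * p.1 + p.2, p.1) := fun p q h ↦ by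
    simp only [Prod.mk.injEq] at h
    exact Prod.ext h.2 (by omega)
  rw [← injective_index.summable_iff]
  · obtain ⟨P, Q, hPQ⟩ := exists_norm_kummerDoubleTerm_le a z hb hb'
    have summable_bound : Summable fun p : ℕ × ℕ ↦ P ^ p.1 / p.1 ! * (Q ^ p.2 / p.2 !) :=
      summable_mul_of_summable_norm (Real.summable_pow_div_factorial P).norm
        (Real.summable_pow_div_factorial Q).norm
    exact .of_norm_bounded summable_bound fun p ↦ hPQ p.1 p.2
  · rintro ⟨N, n⟩ hp
    refine kummerDoubleTerm_of_lt a b z (not_le.mp fun h ↦ hp ⟨(n, N - 2 * n), ?_⟩)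
    simp only [Nat.add_sub_cancel' h]

theorem tsum_kummerDoubleTerm_right (a z : ℂ) {b : ℂ} (h2b : ∀ m : ℕ, 2 * b ≠ -(m : ℂ))
    (hb : ∀ m : ℕ, b ≠ -(m : ℂ)) (N : ℕ) :
    ∑' n, kummerDoubleTerm a b z (N, n) =
      poch (2 * a) N / (poch (2 * b) N * N !) * z ^ N := by
  have term_eq_zero : ∀ n ∉ range (N + 1), kummerDoubleTerm a b z (N, n) = 0 := fun n hn ↦
    kummerDoubleTerm_of_lt a b z (by rw [mem_range] at hn; omega)
  have saalschutz := poch_mul_sum_saalschutzTerm a (add_half_ne_neg_natCast h2b)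
    (show N < 2 * (N + 1) by omega)
  have hpoch := poch_ne_zero hb N
  have hpoch2 := poch_ne_zero h2b N
  rw [tsum_eq_sum term_eq_zero]
  simp only [kummerDoubleTerm]
  rw [← sum_mul, ← sum_div, eq_div_of_mul_eq hpoch2 ((mul_comm _ _).trans saalschutz)]
  field_simp

theorem tsum_kummerDoubleTerm_left (a z : ℂ) {b : ℂ} (hb : ∀ m : ℕ, b ≠ -(m : ℂ)) (n : ℕ) :
    ∑' N, kummerDoubleTerm a b z (N, n) =
      poch a n * poch b n * poch (b - a) n /
          (poch b (2 * n) * poch (2 * b) (2 * n) * n !) * (-z ^ 2) ^ n *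
        kummerM (a + n) (b + 2 * n) z := by
  have coeff_eq : poch a n * poch b n * poch (b - a) n /
      (poch b (2 * n) * poch (2 * b) (2 * n) * n !) =
        (1 / 4) ^ n * poch a n * poch (b - a) n / (poch b (2 * n) * poch (b + 1 / 2) n * n !) := by
    have hpoch := poch_ne_zero hb n
    rw [poch_two_mul, div_pow, one_pow]
    generalize poch (b + 1 / 2) n = D
    field_simp
  have support_subset : support (fun N ↦ kummerDoubleTerm a b z (N, n)) ⊆
      Set.range (2 * n + ·) := fun N hN ↦ by
    have h : 2 * n ≤ N := not_lt.mp fun h ↦ hN (kummerDoubleTerm_of_lt a b z h)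
    exact ⟨N - 2 * n, Nat.add_sub_cancel' h⟩
  rw [← (add_right_injective (2 * n)).tsum_eq support_subset, kummerM, ← tsum_mul_left]
  refine tsum_congr fun k ↦ ?_
  rw [kummerDoubleTerm_two_mul_add, poch_add a, poch_add b (2 * n), coeff_eq, pow_add, pow_mul,
    neg_pow (z ^ 2), show (-1 / 4 : ℂ) = -1 * (1 / 4) by norm_num, mul_pow]
  push_cast
  simp only [div_eq_mul_inv, mul_inv]
  ring

/-- Summation formula for Kummer's confluent hypergeometric function, valid for all
`a, b, z ∈ ℂ` provided `2b`, `b`, and all `b + 2n` avoid nonpositive integers. -/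
theorem kummerM_sum_formula_general (a b z : ℂ)
    (h2b : ∀ m : ℕ, 2 * b ≠ -(m : ℂ))
    (hb : ∀ m : ℕ, b ≠ -(m : ℂ))
    (hb2n : ∀ n m : ℕ, b + 2 * n ≠ -(m : ℂ)) :
    kummerM (2 * a) (2 * b) z =
      ∑' n : ℕ, poch a n * poch b n * poch (b - a) n /
          (poch b (2 * n) * poch (2 * b) (2 * n) * n.factorial) * (-z ^ 2) ^ n *
        kummerM (a + n) (b + 2 * n) z := by
  have summable := summable_kummerDoubleTerm a z hb (add_half_ne_neg_natCast h2b)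
  calc kummerM (2 * a) (2 * b) z = ∑' N, ∑' n, kummerDoubleTerm a b z (N, n) :=
        tsum_congr fun N ↦ (tsum_kummerDoubleTerm_right a z h2b hb N).symm
    _ = ∑' n, ∑' N, kummerDoubleTerm a b z (N, n) :=
        (summable.tsum_comm (f := fun N n ↦ kummerDoubleTerm a b z (N, n))).symm
    _ = _ := tsum_congr fun n ↦ tsum_kummerDoubleTerm_left a z hb n
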